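/- Prenex normal forms for CPL: for every CPL formula A there exists a formula B in prenex normal form — i.e. B = Op₁ ⋯ Opₙ A₀ where each Opⱼ is a counting quantifier C^{qⱼ}_{aⱼ} or D^{qⱼ}_{aⱼ} and the matrix A₀ contains no counting quantifier — such that for every finite name set X with FN(A) ∪ FN(B) ⊆ X, A ≡_X B. -/

import Mathlib

open MeasureTheory

/-- The Cantor space `2^ω` of infinite binary sequences. -/
abbrev Cantor : Type := ℕ → Bool

/-- Rational numbers in the unit interval `[0,1]`. -/
abbrev I01 : Type := (Set.Icc (0 : ℚ) 1)

/-- The value of a rational `q ∈ [0,1]` as an extended nonnegative real. -/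
noncomputable def qq (q : I01) : ENNReal := ENNReal.ofReal (q.1 : ℝ)

/-- `μ` is the fair-coin Bernoulli (uniform) product measure on the Cantor space:
it is a probability measure giving each cylinder fixing the values on a finite set `s`
of coordinates the measure `2^{-|s|}`. -/
def IsCantorMeasure (μ : Measure Cantor) : Prop :=
  IsProbabilityMeasure μ ∧
    ∀ (s : Finset ℕ) (v : ℕ → Bool),
      μ {f : Cantor | ∀ i ∈ s, f i = v i} = (2 : ENNReal)⁻¹ ^ s.card

/-- Valuations of the names in a finite name set `X`: the space `(2^ω)^X`. -/
abbrev Val (X : Finset ℕ) : Type := {a : ℕ // a ∈ X} → Cantor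

/-- `combine f g` is the common extension `f + g` of valuations `f ∈ (2^ω)^X` and
`g ∈ (2^ω)^Y`: it agrees with `f` on `X` and with `g` on `Y` (when `X` and `Y` are
disjoint this is the `f + g` of the paper). -/
def combine {X Y : Finset ℕ} (f : Val X) (g : Val Y) : Val (X ∪ Y) :=
  fun a =>
    if h : a.1 ∈ Y then g ⟨a.1, h⟩
    else f ⟨a.1, (Finset.mem_union.mp a.2).resolve_right h⟩

/-- The `f`-projection `Π_f(𝒳) = {g ∈ (2^ω)^Y | f + g ∈ 𝒳}` of a set
`𝒳 ⊆ (2^ω)^{X∪Y}` along `f ∈ (2^ω)^X`. -/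
def proj {X Y : Finset ℕ} (f : Val X) (S : Set (Val (X ∪ Y))) : Set (Val Y) :=
  {g | combine f g ∈ S}

/-- The fair-coin Bernoulli (uniform) product measure on `(2^ω)^X`, obtained as the
pushforward of the Cantor measure `μ` along the (coordinate-separating) injection
determined by the pairing function: the coordinates `(a, i)` are i.i.d. fair coins. -/
noncomputable def cantorPi (μ : Measure Cantor) (X : Finset ℕ) : Measure (Val X) :=
  Measure.map (fun (g : Cantor) (a : {x : ℕ // x ∈ X}) (i : ℕ) => g (Nat.pair a.1 i)) μ

/-- Named Boolean formulas `b ::= xᵢᵃ | ⊤ | ⊥ | ¬b | b ∧ c | b ∨ c`.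
`NBF.var i a` is the named propositional variable `xᵢᵃ`. -/
inductive NBF : Type where
  | var : ℕ → ℕ → NBF
  | tt : NBF
  | ff : NBF
  | neg : NBF → NBF
  | conj : NBF → NBF → NBF
  | disj : NBF → NBF → NBF
deriving DecidableEq

/-- The set of (free) names occurring in a named Boolean formula. -/
def NBF.FN : NBF → Finset ℕ
  | .var _ a => {a}
  | .tt => ∅
  | .ff => ∅
  | .neg b => b.FN
  | .conj b c => b.FN ∪ c.FN
  | .disj b c => b.FN ∪ c.FN

/-- The interpretation `⟦b⟧_X ⊆ (2^ω)^X` of a named Boolean formula with `FN(b) ⊆ X`. -/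
def NBF.semN : NBF → (X : Finset ℕ) → Set (Val X)
  | .var i a, X => {f | ∀ h : a ∈ X, f ⟨a, h⟩ i = true}
  | .tt, _ => Set.univ
  | .ff, _ => ∅
  | .neg b, X => (b.semN X)ᶜ
  | .conj b c, X => b.semN X ∩ c.semN X
  | .disj b c, X => b.semN X ∪ c.semN X

/-- The disjunction `⋁_{i<k} c i` of a finite family of named Boolean formulas. -/
def NBF.bigDisj {k : ℕ} (c : Fin k → NBF) : NBF :=
  (List.ofFn c).foldr NBF.disj NBF.ff

/-- Formulas of (multivariate) counting propositional logic CPL: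
`A ::= i_a | ¬A | A ∧ B | A ∨ B | C^q_a A | D^q_a A`, with `i ∈ ℕ`, `a` a name and
`q` a rational in `[0,1]`.  `CPL.atom i a` is the named atom `i_a`, and
`CPL.cnt q a A` (resp. `CPL.dnt q a A`) is `C^q_a A` (resp. `D^q_a A`). -/
inductive CPL : Type where
  | atom : ℕ → ℕ → CPL
  | neg : CPL → CPL
  | conj : CPL → CPL → CPL
  | disj : CPL → CPL → CPL
  | cnt : I01 → ℕ → CPL → CPL
  | dnt : I01 → ℕ → CPL → CPL
deriving DecidableEq

/-- The set of free names of a CPL formula; `a` is bound in `C^q_a A` and `D^q_a A`. -/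
def CPL.FN : CPL → Finset ℕ
  | .atom _ a => {a}
  | .neg A => A.FN
  | .conj A B => A.FN ∪ B.FN
  | .disj A B => A.FN ∪ B.FN
  | .cnt _ a A => A.FN \ {a}
  | .dnt _ a A => A.FN \ {a}

/-- The interpretation `⟦A⟧_X ⊆ (2^ω)^X` of a CPL formula `A` with `FN(A) ⊆ X`:
`⟦C^q_a A⟧_X = {f | μ(Π_f(⟦A⟧_{X∪{a}})) ≥ q}` and
`⟦D^q_a A⟧_X = {f | μ(Π_f(⟦A⟧_{X∪{a}})) < q}`. -/
noncomputable def CPL.semN (μ : Measure Cantor) : CPL → (X : Finset ℕ) → Set (Val X)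
  | .atom i a, X => {f | ∀ h : a ∈ X, f ⟨a, h⟩ i = true}
  | .neg A, X => (CPL.semN μ A X)ᶜ
  | .conj A B, X => CPL.semN μ A X ∩ CPL.semN μ B X
  | .disj A B, X => CPL.semN μ A X ∪ CPL.semN μ B X
  | .cnt q a A, X =>
      {f | qq q ≤ cantorPi μ {a} (proj (Y := {a}) f (CPL.semN μ A (X ∪ {a})))}
  | .dnt q a A, X =>
      {f | cantorPi μ {a} (proj (Y := {a}) f (CPL.semN μ A (X ∪ {a}))) < qq q}

/-- A CPL formula is quantifier-free when it contains no counting quantifier. -/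
def CPL.QFree : CPL → Prop
  | .atom _ _ => True
  | .neg A => A.QFree
  | .conj A B => A.QFree ∧ B.QFree
  | .disj A B => A.QFree ∧ B.QFree
  | .cnt _ _ _ => False
  | .dnt _ _ _ => False

/-- Prenex normal forms: `Op₁ ⋯ Opₙ A₀` where each `Opⱼ` is `C^{qⱼ}_{aⱼ}` or
`D^{qⱼ}_{aⱼ}` and the matrix `A₀` contains no counting quantifier. -/
inductive CPL.IsPNF : CPL → Prop where
  | matrix {A : CPL} : A.QFree → CPL.IsPNF A
  | cnt {A : CPL} (q : I01) (a : ℕ) : CPL.IsPNF A → CPL.IsPNF (.cnt q a A)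
  | dnt {A : CPL} (q : I01) (a : ℕ) : CPL.IsPNF A → CPL.IsPNF (.dnt q a A)

/-- Positive prenex normal forms: prenex normal forms in which no `D`-quantifier
occurs, i.e. `C^{q₁}_{a₁} ⋯ C^{qₙ}_{aₙ} A₀` with `A₀` quantifier-free. -/
inductive CPL.IsPPNF : CPL → Prop where
  | matrix {A : CPL} : A.QFree → CPL.IsPPNF A
  | cnt {A : CPL} (q : I01) (a : ℕ) : CPL.IsPPNF A → CPL.IsPPNF (.cnt q a A)


namespace CPLPrenex

def bv : CPL → Finset ℕ
  | .atom _ _ => ∅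
  | .neg A => bv A
  | .conj A B => bv A ∪ bv B
  | .disj A B => bv A ∪ bv B
  | .cnt _ a A => insert a (bv A)
  | .dnt _ a A => insert a (bv A)

noncomputable def sem (μ : Measure Cantor) : CPL → (ℕ → Cantor) → Prop
  | .atom i a, F => F a i = true
  | .neg A, F => ¬ sem μ A F
  | .conj A B, F => sem μ A F ∧ sem μ B F
  | .disj A B, F => sem μ A F ∨ sem μ B F
  | .cnt q a A, F => qq q ≤ μ {g | sem μ A (Function.update F a g)}
  | .dnt q a A, F => μ {g | sem μ A (Function.update F a g)} < qq q

lemma uniq (μ ν : Measure Cantor) (hμ : IsCantorMeasure μ) (hν : IsCantorMeasure ν) : μ = ν := by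
  haveI := hμ.1
  haveI := hν.1
  let C : Set (Set Cantor) :=
    {S | S = ∅ ∨ ∃ (s : Finset ℕ) (v : ℕ → Bool), S = {f : Cantor | ∀ i ∈ s, f i = v i}}
  refine ext_of_generate_finite C ?_ ?_ ?_ ?_
  · apply le_antisymm
    · rw [MeasurableSpace.pi_eq_generateFrom_projections]
      apply MeasurableSpace.generateFrom_le
      rintro S ⟨i, B, -, rfl⟩
      have : Function.eval i ⁻¹' B = ⋃ b ∈ B, {f : Cantor | ∀ j ∈ ({i} : Finset ℕ), f j = (fun _ => b) j} := by
        ext f; simp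
      rw [this]
      refine @MeasurableSet.biUnion _ _ (MeasurableSpace.generateFrom C) _ _ (Set.to_countable _) ?_
      intro b _
      exact MeasurableSpace.measurableSet_generateFrom (Or.inr ⟨_, _, rfl⟩)
    · apply MeasurableSpace.generateFrom_le
      rintro S (rfl | ⟨s, v, rfl⟩)
      · exact MeasurableSet.empty
      · have : {f : Cantor | ∀ i ∈ s, f i = v i} = ⋂ i ∈ s, (fun f : Cantor => f i) ⁻¹' {v i} := by
          ext f; simp
        rw [this]
        exact Finset.measurableSet_biInter _ fun i _ =>
          measurable_pi_apply i (measurableSet_singleton _)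
  · rintro S (rfl | ⟨s, v, rfl⟩) T (rfl | ⟨t, w, rfl⟩) hne
    · left; simp
    · left; simp
    · left; simp
    · right
      obtain ⟨f, hf, hf'⟩ := hne
      refine ⟨s ∪ t, f, ?_⟩
      ext g
      simp only [Set.mem_inter_iff, Set.mem_setOf_eq, Finset.mem_union] at *
      constructor
      · rintro ⟨h1, h2⟩ i (hi | hi)
        · rw [h1 i hi, hf i hi]
        · rw [h2 i hi, hf' i hi]
      · intro h
        exact ⟨fun i hi => by rw [h i (Or.inl hi), hf i hi],
          fun i hi => by rw [h i (Or.inr hi), hf' i hi]⟩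
  · rintro S (rfl | ⟨s, v, rfl⟩)
    · simp
    · rw [hμ.2, hν.2]
  · simp

lemma map_pair (μ : Measure Cantor) (hμ : IsCantorMeasure μ) (a : ℕ) :
    Measure.map (fun (g : Cantor) (i : ℕ) => g (Nat.pair a i)) μ = μ := by
  haveI := hμ.1
  have hm : Measurable (fun (g : Cantor) (i : ℕ) => g (Nat.pair a i)) := by fun_prop
  refine uniq _ _ ⟨Measure.isProbabilityMeasure_map hm.aemeasurable, ?_⟩ hμ
  intro s v
  have hms : MeasurableSet {f : Cantor | ∀ i ∈ s, f i = v i} := by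
    have : {f : Cantor | ∀ i ∈ s, f i = v i} = ⋂ i ∈ s, (fun f : Cantor => f i) ⁻¹' {v i} := by
      ext f; simp
    rw [this]
    exact Finset.measurableSet_biInter _ fun i _ =>
      measurable_pi_apply i (measurableSet_singleton _)
  rw [Measure.map_apply hm hms]
  have hinj : Function.Injective (fun i => Nat.pair a i) := by
    intro i j h
    simpa using h
  have := hμ.2 (s.image (fun i => Nat.pair a i)) (fun n => v (Nat.unpair n).2)
  rw [Finset.card_image_of_injective _ hinj] at this
  rw [← this]
  congr 1
  ext f
  simp

lemma cantorPi_single (μ : Measure Cantor) (hμ : IsCantorMeasure μ) (a : ℕ) (S : Set (Val {a})) :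
    cantorPi μ {a} S = μ {g | (fun _ => g) ∈ S} := by
  let e : Cantor ≃ᵐ Val {a} :=
    { toFun := fun g _ => g
      invFun := fun f => f ⟨a, by simp⟩
      left_inv := fun g => rfl
      right_inv := fun f => by
        funext ⟨x, hx⟩
        have : x = a := by simpa using hx
        subst this
        rfl
      measurable_toFun := by
        exact measurable_pi_lambda _ fun _ => measurable_id
      measurable_invFun := by
        exact measurable_pi_apply _ }
  have h : cantorPi μ {a} = Measure.map e μ := by
    conv_rhs => rw [← map_pair μ hμ a]
    rw [Measure.map_map e.measurable (by fun_prop)]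
    unfold cantorPi
    congr 1
    funext g ⟨x, hx⟩ i
    have : x = a := by simpa using hx
    subst this
    rfl
  rw [h, MeasurableEquiv.map_apply]
  rfl

lemma combine_agree {X : Finset ℕ} {a : ℕ} (f : Val X) (F : ℕ → Cantor)
    (hF : ∀ b (h : b ∈ X), F b = f ⟨b, h⟩) (g : Cantor) (b : ℕ) (h : b ∈ X ∪ {a}) :
    Function.update F a g b = combine (Y := {a}) f (fun _ => g) ⟨b, h⟩ := by
  unfold combine
  by_cases hb : b = a
  · subst hb; simp
  · have hX : b ∈ X := by simpa [hb] using h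
    simp [hb, hF b hX]

lemma link (μ : Measure Cantor) (hμ : IsCantorMeasure μ) (A : CPL) :
    ∀ (X : Finset ℕ), A.FN ⊆ X → ∀ (f : Val X) (F : ℕ → Cantor),
      (∀ b (h : b ∈ X), F b = f ⟨b, h⟩) → (f ∈ CPL.semN μ A X ↔ sem μ A F) := by
  induction A with
  | atom i a =>
    intro X hX f F hF
    have ha : a ∈ X := by simpa [CPL.FN] using hX
    simp [CPL.semN, sem, hF a ha, ha]
  | neg A ih =>
    intro X hX f F hF
    simp only [CPL.semN, sem, Set.mem_compl_iff]
    rw [ih X hX f F hF]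
  | conj A B iA iB =>
    intro X hX f F hF
    simp only [CPL.FN, Finset.union_subset_iff] at hX
    simp only [CPL.semN, sem, Set.mem_inter_iff]
    rw [iA X hX.1 f F hF, iB X hX.2 f F hF]
  | disj A B iA iB =>
    intro X hX f F hF
    simp only [CPL.FN, Finset.union_subset_iff] at hX
    simp only [CPL.semN, sem, Set.mem_union]
    rw [iA X hX.1 f F hF, iB X hX.2 f F hF]
  | cnt q a A ih =>
    intro X hX f F hF
    have hX' : A.FN ⊆ X ∪ {a} := by
      intro x hx
      have := @hX x
      simp only [CPL.FN, Finset.mem_sdiff, Finset.mem_singleton, Finset.mem_union] at *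
      tauto
    simp only [CPL.semN, sem, Set.mem_setOf_eq]
    rw [cantorPi_single μ hμ]
    simp only [proj, Set.mem_setOf_eq]
    simp only [fun g => ih _ hX' _ _ (combine_agree (a := a) f F hF g)]
  | dnt q a A ih =>
    intro X hX f F hF
    have hX' : A.FN ⊆ X ∪ {a} := by
      intro x hx
      have := @hX x
      simp only [CPL.FN, Finset.mem_sdiff, Finset.mem_singleton, Finset.mem_union] at *
      tauto
    simp only [CPL.semN, sem, Set.mem_setOf_eq]
    rw [cantorPi_single μ hμ]
    simp only [proj, Set.mem_setOf_eq]
    simp only [fun g => ih _ hX' _ _ (combine_agree (a := a) f F hF g)]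

lemma sem_congr (μ : Measure Cantor) (A : CPL) :
    ∀ F G : ℕ → Cantor, (∀ b ∈ A.FN, F b = G b) → (sem μ A F ↔ sem μ A G) := by
  have aux : ∀ (A : CPL) (a : ℕ) (F G : ℕ → Cantor), (∀ b ∈ A.FN \ {a}, F b = G b) →
      ∀ g, ∀ b ∈ A.FN, Function.update F a g b = Function.update G a g b := by
    intro A a F G h g b hb
    by_cases hba : b = a
    · subst hba; simp
    · simp [hba, h b (by simp [hb, hba])]
  induction A with
  | atom i a => intro F G h; simp [sem, h a (by simp [CPL.FN])]
  | neg A ih => intro F G h; simp only [sem]; rw [ih F G h]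
  | conj A B iA iB =>
    intro F G h
    simp only [sem]
    rw [iA F G (fun b hb => h b (by simp [CPL.FN, hb])), iB F G (fun b hb => h b (by simp [CPL.FN, hb]))]
  | disj A B iA iB =>
    intro F G h
    simp only [sem]
    rw [iA F G (fun b hb => h b (by simp [CPL.FN, hb])), iB F G (fun b hb => h b (by simp [CPL.FN, hb]))]
  | cnt q a A ih =>
    intro F G h
    simp only [sem]
    simp only [fun g => ih _ _ (aux A a F G h g)]
  | dnt q a A ih =>
    intro F G h
    simp only [sem]
    simp only [fun g => ih _ _ (aux A a F G h g)]

lemma sem_fresh (μ : Measure Cantor) (A : CPL) (a : ℕ) (ha : a ∉ A.FN) (F : ℕ → Cantor)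
    (g : Cantor) : sem μ A (Function.update F a g) ↔ sem μ A F := by
  apply sem_congr
  intro b hb
  have : b ≠ a := fun h => ha (h ▸ hb)
  simp [this]

/-- There is a prenex form with free names in `S`, bound names in `V`, meaning `Φ`. -/
def Has (μ : Measure Cantor) (S V : Finset ℕ) (Φ : (ℕ → Cantor) → Prop) : Prop :=
  ∃ R : CPL, R.IsPNF ∧ R.FN ⊆ S ∧ bv R ⊆ V ∧ ∀ F, sem μ R F ↔ Φ F

lemma Has.mono {μ : Measure Cantor} {S V S' V' : Finset ℕ} {Φ Φ' : (ℕ → Cantor) → Prop}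
    (h : Has μ S V Φ) (hS : S ⊆ S') (hV : V ⊆ V') (hΦ : ∀ F, Φ F ↔ Φ' F) : Has μ S' V' Φ' := by
  obtain ⟨R, h1, h2, h3, h4⟩ := h
  exact ⟨R, h1, h2.trans hS, h3.trans hV, fun F => (h4 F).trans (hΦ F)⟩

lemma Has.cnt {μ : Measure Cantor} {S V : Finset ℕ} {Φ : (ℕ → Cantor) → Prop}
    (h : Has μ S V Φ) (q : I01) (a : ℕ) :
    Has μ (S \ {a}) (insert a V) (fun F => qq q ≤ μ {g | Φ (Function.update F a g)}) := by
  obtain ⟨R, h1, h2, h3, h4⟩ := h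
  refine ⟨.cnt q a R, .cnt q a h1, Finset.sdiff_subset_sdiff h2 (le_refl _),
    Finset.insert_subset_insert _ h3, fun F => ?_⟩
  simp only [sem, h4]

lemma Has.dnt {μ : Measure Cantor} {S V : Finset ℕ} {Φ : (ℕ → Cantor) → Prop}
    (h : Has μ S V Φ) (q : I01) (a : ℕ) :
    Has μ (S \ {a}) (insert a V) (fun F => μ {g | Φ (Function.update F a g)} < qq q) := by
  obtain ⟨R, h1, h2, h3, h4⟩ := h
  refine ⟨.dnt q a R, .dnt q a h1, Finset.sdiff_subset_sdiff h2 (le_refl _),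
    Finset.insert_subset_insert _ h3, fun F => ?_⟩
  simp only [sem, h4]

lemma pnf_neg (μ : Measure Cantor) (P : CPL) (h : P.IsPNF) :
    ∃ R : CPL, R.IsPNF ∧ R.FN = P.FN ∧ bv R = bv P ∧ ∀ F, sem μ R F ↔ ¬ sem μ P F := by
  cases h with
  | matrix h => exact ⟨.neg P, .matrix h, rfl, rfl, fun F => Iff.rfl⟩
  | @cnt A q a h => exact ⟨.dnt q a A, .dnt q a h, rfl, rfl, fun F => by simp [sem]⟩
  | @dnt A q a h => exact ⟨.cnt q a A, .cnt q a h, rfl, rfl, fun F => by simp [sem]⟩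

lemma qq_le_one (q : I01) : qq q ≤ 1 := by
  unfold qq
  rw [ENNReal.ofReal_le_one]
  exact_mod_cast q.2.2

section steps
variable {μ : Measure Cantor} [IsProbabilityMeasure μ] (q : I01) (s : Set Cantor) (p : Prop)

lemma cnt_and (hq : qq q ≠ 0) : (qq q ≤ μ {g | g ∈ s ∧ p}) ↔ (qq q ≤ μ s ∧ p) := by
  by_cases hp : p <;> simp [hp, hq]

lemma cnt_or : (qq q ≤ μ {g | g ∈ s ∨ p}) ↔ (qq q ≤ μ s ∨ p) := by
  by_cases hp : p <;> simp [hp, qq_le_one]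

lemma dnt_and : (μ {g | g ∈ s ∨ ¬ p} < qq q) ↔ (μ s < qq q ∧ p) := by
  by_cases hp : p <;> simp [hp, qq_le_one]

lemma dnt_or (hq : qq q ≠ 0) : (μ {g | g ∈ s ∧ ¬ p} < qq q) ↔ (μ s < qq q ∨ p) := by
  by_cases hp : p <;> simp [hp, pos_iff_ne_zero, hq]

end steps

def Merge (μ : Measure Cantor) (P Q : CPL) : Prop :=
  Has μ (P.FN ∪ Q.FN) (bv P ∪ bv Q) (fun F => sem μ P F ∧ sem μ Q F) ∧
  Has μ (P.FN ∪ Q.FN) (bv P ∪ bv Q) (fun F => sem μ P F ∨ sem μ Q F)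

lemma Merge.symm {μ : Measure Cantor} {P Q : CPL} (h : Merge μ P Q) : Merge μ Q P :=
  ⟨h.1.mono (Finset.union_comm _ _).le (Finset.union_comm _ _).le (fun _ => and_comm),
   h.2.mono (Finset.union_comm _ _).le (Finset.union_comm _ _).le (fun _ => or_comm)⟩

lemma sdiff_aux {S T : Finset ℕ} {a : ℕ} : (S ∪ T) \ {a} ⊆ S \ {a} ∪ T := by
  intro x
  simp only [Finset.mem_sdiff, Finset.mem_union]
  tauto

lemma ins_aux {S T : Finset ℕ} {a : ℕ} : insert a (S ∪ T) ⊆ insert a S ∪ T := by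
  rw [Finset.insert_union]

lemma merge_cnt {μ : Measure Cantor} [IsProbabilityMeasure μ] {P Q : CPL} (hQ : Q.IsPNF)
    (q : I01) (a : ℕ) (ha : a ∉ Q.FN) (h : Merge μ P Q) : Merge μ (.cnt q a P) Q := by
  constructor
  · by_cases hq : qq q = 0
    · exact ⟨Q, hQ, Finset.subset_union_right, Finset.subset_union_right,
        fun F => by simp [sem, hq]⟩
    · refine (h.1.cnt q a).mono sdiff_aux ins_aux fun F => ?_
      simp only [sem_fresh μ Q a ha, sem]
      exact cnt_and q {g | sem μ P (Function.update F a g)} _ hq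
  · refine (h.2.cnt q a).mono sdiff_aux ins_aux fun F => ?_
    simp only [sem_fresh μ Q a ha, sem]
    exact cnt_or q {g | sem μ P (Function.update F a g)} _

lemma merge_dnt {μ : Measure Cantor} [IsProbabilityMeasure μ] {P Q Q' : CPL} (hQ : Q.IsPNF)
    (hFN : Q'.FN = Q.FN) (hbv : bv Q' = bv Q) (hs : ∀ F, sem μ Q' F ↔ ¬ sem μ Q F)
    (q : I01) (a : ℕ) (ha : a ∉ Q.FN) (h : Merge μ P Q') : Merge μ (.dnt q a P) Q := by
  unfold Merge at h
  rw [hFN, hbv] at h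
  simp only [hs] at h
  constructor
  · refine (h.2.dnt q a).mono sdiff_aux ins_aux fun F => ?_
    simp only [sem_fresh μ Q a ha, sem]
    exact dnt_and q {g | sem μ P (Function.update F a g)} _
  · by_cases hq : qq q = 0
    · exact ⟨Q, hQ, Finset.subset_union_right, Finset.subset_union_right,
        fun F => by simp [sem, hq]⟩
    · refine (h.1.dnt q a).mono sdiff_aux ins_aux fun F => ?_
      simp only [sem_fresh μ Q a ha, sem]
      exact dnt_or q {g | sem μ P (Function.update F a g)} _ hq

lemma merge_qf {μ : Measure Cantor} [IsProbabilityMeasure μ] {Q : CPL} (hQ : Q.IsPNF) :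
    ∀ P : CPL, P.QFree → Disjoint (bv Q) P.FN → Merge μ Q P := by
  induction hQ with
  | @matrix A hA =>
    intro P hP _
    exact ⟨⟨.conj A P, .matrix ⟨hA, hP⟩, le_refl _, le_refl _, fun F => Iff.rfl⟩,
      ⟨.disj A P, .matrix ⟨hA, hP⟩, le_refl _, le_refl _, fun F => Iff.rfl⟩⟩
  | cnt q a h ih =>
    intro P hP hd
    simp only [bv, Finset.disjoint_insert_left] at hd
    exact merge_cnt (.matrix hP) q a hd.1 (ih P hP hd.2)
  | dnt q a h ih =>
    intro P hP hd
    simp only [bv, Finset.disjoint_insert_left] at hd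
    exact merge_dnt (Q' := .neg P) (.matrix hP) rfl rfl (fun _ => Iff.rfl) q a hd.1
      (ih (.neg P) hP hd.2)

lemma merge_all {μ : Measure Cantor} [IsProbabilityMeasure μ] {P : CPL} (hP : P.IsPNF) :
    ∀ Q : CPL, Q.IsPNF → Disjoint (bv P) Q.FN → Disjoint (bv Q) P.FN → Disjoint (bv Q) (bv P) →
      Merge μ P Q := by
  have aux : ∀ (V S T : Finset ℕ) (a : ℕ), Disjoint V (S \ {a}) → Disjoint V (insert a T) →
      Disjoint V S ∧ Disjoint V T := by
    intro V S T a h1 h2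
    simp only [Finset.disjoint_insert_right] at h2
    refine ⟨?_, h2.2⟩
    rw [Finset.disjoint_left] at *
    intro x hx hxS
    refine h1 hx ?_
    have : x ≠ a := fun h => h2.1 (h ▸ hx)
    simp [hxS, this]
  induction hP with
  | matrix hA =>
    intro Q hQ _ h2 _
    exact (merge_qf hQ _ hA h2).symm
  | cnt q a h ih =>
    intro Q hQ h1 h2 h3
    simp only [bv, Finset.disjoint_insert_left] at h1
    obtain ⟨h4, h5⟩ := aux _ _ _ _ h2 h3
    exact merge_cnt hQ q a h1.1 (ih Q hQ h1.2 h4 h5)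
  | dnt q a h ih =>
    intro Q hQ h1 h2 h3
    simp only [bv, Finset.disjoint_insert_left] at h1
    obtain ⟨h4, h5⟩ := aux _ _ _ _ h2 h3
    obtain ⟨Q', k1, k2, k3, k4⟩ := pnf_neg μ Q hQ
    refine merge_dnt hQ k2 k3 k4 q a h1.1 (ih Q' k1 ?_ ?_ ?_)
    · rw [k2]; exact h1.2
    · rw [k3]; exact h4
    · rw [k3]; exact h5

/-- `A` renamed along `σ` has a prenex form whose bound names avoid `N`. -/
def Good (μ : Measure Cantor) (A : CPL) (σ : ℕ → ℕ) (N : Finset ℕ) : Prop :=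
  ∃ B : CPL, B.IsPNF ∧ B.FN ⊆ A.FN.image σ ∧ Disjoint (bv B) N ∧
    ∀ F, sem μ B F ↔ sem μ A (F ∘ σ)

lemma good_pair {μ : Measure Cantor} [IsProbabilityMeasure μ] {A B : CPL}
    (hA : ∀ σ N, Good μ A σ N) (hB : ∀ σ N, Good μ B σ N) (σ : ℕ → ℕ) (N : Finset ℕ) :
    Good μ (.conj A B) σ N ∧ Good μ (.disj A B) σ N := by
  obtain ⟨P, p1, p2, p3, p4⟩ := hA σ (N ∪ B.FN.image σ)
  obtain ⟨Q, q1, q2, q3, q4⟩ := hB σ (N ∪ (A.FN.image σ ∪ bv P))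
  simp only [Finset.disjoint_union_right] at p3 q3
  have hM : Merge μ P Q := merge_all p1 Q q1 (p3.2.mono_right q2) (q3.2.1.mono_right p2) q3.2.2
  have hsub : P.FN ∪ Q.FN ⊆ (A.FN ∪ B.FN).image σ := by
    rw [Finset.image_union]; exact Finset.union_subset_union p2 q2
  have hdis : Disjoint (bv P ∪ bv Q) N := by
    rw [Finset.disjoint_union_left]; exact ⟨p3.1, q3.1⟩
  constructor
  · obtain ⟨R, r1, r2, r3, r4⟩ := hM.1
    refine ⟨R, r1, r2.trans hsub, hdis.mono_left r3, fun F => ?_⟩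
    simp only [r4, p4, q4, sem]
  · obtain ⟨R, r1, r2, r3, r4⟩ := hM.2
    refine ⟨R, r1, r2.trans hsub, hdis.mono_left r3, fun F => ?_⟩
    simp only [r4, p4, q4, sem]

lemma good_quant {μ : Measure Cantor} {A : CPL} (hA : ∀ σ N, Good μ A σ N) (a : ℕ)
    (σ : ℕ → ℕ) (N : Finset ℕ) :
    ∃ (b : ℕ) (B : CPL), B.IsPNF ∧ B.FN \ {b} ⊆ (A.FN \ {a}).image σ ∧
      Disjoint (insert b (bv B)) N ∧
      ∀ F g, sem μ B (Function.update F b g) ↔ sem μ A (Function.update (F ∘ σ) a g) := by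
  obtain ⟨b, hb⟩ := Infinite.exists_notMem_finset (N ∪ A.FN.image σ)
  simp only [Finset.mem_union, not_or] at hb
  obtain ⟨B, h1, h2, h3, h4⟩ := hA (Function.update σ a b) N
  refine ⟨b, B, h1, ?_, ?_, ?_⟩
  · intro x hx
    simp only [Finset.mem_sdiff, Finset.mem_singleton] at hx
    obtain ⟨y, hy, hyx⟩ := Finset.mem_image.mp (h2 hx.1)
    by_cases hya : y = a
    · subst hya; simp at hyx; exact absurd hyx.symm hx.2
    · rw [Function.update_of_ne hya] at hyx
      exact Finset.mem_image.mpr ⟨y, by simp [hy, hya], hyx⟩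
  · rw [Finset.disjoint_insert_left]; exact ⟨hb.1, h3⟩
  · intro F g
    rw [h4]
    apply sem_congr
    intro c hc
    by_cases hca : c = a
    · subst hca; simp
    · have : σ c ≠ b := fun h => hb.2 (Finset.mem_image.mpr ⟨c, hc, h⟩)
      simp [hca, this]

lemma good_all (μ : Measure Cantor) [IsProbabilityMeasure μ] (A : CPL) :
    ∀ σ N, Good μ A σ N := by
  induction A with
  | atom i a =>
    intro σ N
    exact ⟨.atom i (σ a), .matrix trivial, by simp [CPL.FN], by simp [bv], fun F => Iff.rfl⟩
  | neg A ih =>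
    intro σ N
    obtain ⟨B, h1, h2, h3, h4⟩ := ih σ N
    obtain ⟨R, k1, k2, k3, k4⟩ := pnf_neg μ B h1
    exact ⟨R, k1, k2 ▸ h2, k3 ▸ h3, fun F => by rw [k4, h4]; rfl⟩
  | conj A B iA iB => exact fun σ N => (good_pair iA iB σ N).1
  | disj A B iA iB => exact fun σ N => (good_pair iA iB σ N).2
  | cnt q a A ih =>
    intro σ N
    obtain ⟨b, B, h1, h2, h3, h4⟩ := good_quant ih a σ N
    exact ⟨.cnt q b B, .cnt q b h1, h2, h3, fun F => by simp only [sem, h4]⟩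
  | dnt q a A ih =>
    intro σ N
    obtain ⟨b, B, h1, h2, h3, h4⟩ := good_quant ih a σ N
    exact ⟨.dnt q b B, .dnt q b h1, h2, h3, fun F => by simp only [sem, h4]⟩

end CPLPrenex

theorem cpl_prenex_normal_form
    (μ : Measure Cantor) (hμ : IsCantorMeasure μ) (A : CPL) :
    ∃ B : CPL, B.IsPNF ∧
      ∀ X : Finset ℕ, A.FN ∪ B.FN ⊆ X → CPL.semN μ A X = CPL.semN μ B X := by
  haveI := hμ.1
  obtain ⟨B, h1, -, -, h4⟩ := CPLPrenex.good_all μ A id ∅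
  refine ⟨B, h1, fun X hX => ?_⟩
  rw [Finset.union_subset_iff] at hX
  ext f
  have hF : ∀ b (h : b ∈ X),
      (fun c => if h : c ∈ X then f ⟨c, h⟩ else fun _ => false) b = f ⟨b, h⟩ := by
    intro b h; simp [h]
  rw [CPLPrenex.link μ hμ A X hX.1 f _ hF, CPLPrenex.link μ hμ B X hX.2 f _ hF, h4]
  rfl
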